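/- Let n be a positive integer, let α ∈ (0,1), and let f(x) = √2·x(1-x). If 0 ≤ δ ≤ f(α)/√n and α+δ ≤ 1 and α-δ ≥ 0, then (f(α+δ) + f(α-δ))/(2f(α)) ≥ √(1 - 1/n). -/

import Mathlib

/-!
The symmetric average of `f(x) = c·x(1-x)` about `α` is exactly `f(α)·(1 - δ²/(α(1-α)))`. If
`α(1-α) > 0`, the bound on `δ` makes `δ²/(α(1-α))` at most `c²·α(1-α)/t ≤ (1/t)/2`, as `c² ≤ 2` and
`α(1-α) ≤ 1/4`; otherwise that quotient is nonpositive anyway. The claim then follows from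
`√(1 - 1/t) ≤ 1 - (1/t)/2`.
-/

/-- The logistic map with parameter `c`; the function `f` of the paper is the case `c = √2`. -/
def logisticMap {K : Type*} [Ring K] (c x : K) : K :=
  c * (x * (1 - x))

theorem logisticMap_pos {K : Type*} [Ring K] [PartialOrder K] [IsStrictOrderedRing K] {c x : K}
    (hc : 0 < c) (hx : x ∈ Set.Ioo 0 1) : 0 < logisticMap c x :=
  mul_pos hc (mul_pos hx.1 (sub_pos.2 hx.2))

theorem logisticMap_add_add_logisticMap_sub {K : Type*} [CommRing K] (c α δ : K) :
    logisticMap c (α + δ) + logisticMap c (α - δ) = 2 * logisticMap c α - 2 * (c * δ ^ 2) := by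
  simp only [logisticMap]
  ring

theorem logisticMap_add_add_logisticMap_sub_div {K : Type*} [Field K] [NeZero (2 : K)]
    {c α : K} (h : logisticMap c α ≠ 0) (δ : K) :
    (logisticMap c (α + δ) + logisticMap c (α - δ)) / (2 * logisticMap c α) =
      1 - δ ^ 2 / (α * (1 - α)) := by
  have hc : c ≠ 0 := left_ne_zero_of_mul h
  rw [logisticMap_add_add_logisticMap_sub, ← mul_sub, mul_div_mul_left _ _ two_ne_zero,
    sub_div, div_self h, logisticMap, mul_div_mul_left _ _ hc]

theorem mul_one_sub_le_one_fourth {K : Type*} [Field K] [LinearOrder K] [IsStrictOrderedRing K]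
    (x : K) : x * (1 - x) ≤ 1 / 4 := by
  linarith [four_mul_le_sq_add x (1 - x)]

theorem sq_div_mul_one_sub_le {c t α δ : ℝ} (hc : c ^ 2 ≤ 2) (ht : 0 < t)
    (hδ : |δ| ≤ |logisticMap c α| / √t) : δ ^ 2 / (α * (1 - α)) ≤ 1 / t / 2 := by
  rcases le_or_gt (α * (1 - α)) 0 with hα | hα
  · exact (div_nonpos_of_nonneg_of_nonpos (sq_nonneg δ) hα).trans (by positivity)
  have hδ_sq : δ ^ 2 ≤ logisticMap c α ^ 2 / t := by
    simpa only [div_pow, sq_abs, Real.sq_sqrt ht.le] using pow_le_pow_left₀ (abs_nonneg δ) hδ 2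
  calc
    δ ^ 2 / (α * (1 - α)) ≤ logisticMap c α ^ 2 / t / (α * (1 - α)) := by gcongr
    _ = c ^ 2 * (α * (1 - α)) / t := by
      rw [logisticMap, div_right_comm, mul_pow, sq (α * (1 - α)), ← mul_assoc,
        mul_div_cancel_right₀ _ hα.ne']
    _ ≤ 2 * (1 / 4) / t := by
      gcongr
      exact mul_one_sub_le_one_fourth α
    _ = 1 / t / 2 := by ring

theorem stmt_2_general {c t α δ : ℝ} (hc : c ^ 2 ≤ 2) (ht : 1 ≤ t) (hα : logisticMap c α ≠ 0)
    (hδ : |δ| ≤ |logisticMap c α| / √t) :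
    √(1 - 1 / t) ≤
      (logisticMap c (α + δ) + logisticMap c (α - δ)) / (2 * logisticMap c α) := by
  have ht_pos : 0 < t := one_pos.trans_le ht
  have h_inv : 1 / t ≤ 1 := (div_le_one ht_pos).2 ht
  calc
    √(1 - 1 / t) ≤ 1 - 1 / t / 2 := by
      simpa only [← sub_eq_add_neg, neg_div] using Real.sqrt_one_add_le (neg_le_neg h_inv)
    _ ≤ 1 - δ ^ 2 / (α * (1 - α)) := sub_le_sub_left (sq_div_mul_one_sub_le hc ht_pos hδ) 1
    _ = _ := (logisticMap_add_add_logisticMap_sub_div hα δ).symm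

/-- Claim 2.2 of the paper: with `f(x) = √2·x(1-x)`, if `0 ≤ δ ≤ f(α)/√n`
(and `α ± δ` stay in `[0,1]`), then `(f(α+δ)+f(α-δ))/(2f(α)) ≥ √(1-1/n)`. -/
theorem stmt_2 (n : ℕ) (hn : 0 < n) (α δ : ℝ)
    (hα : α ∈ Set.Ioo (0 : ℝ) 1)
    (f : ℝ → ℝ) (hf : ∀ x, f x = Real.sqrt 2 * (x * (1 - x)))
    (hδ0 : 0 ≤ δ) (hδ : δ ≤ f α / Real.sqrt (n : ℝ))
    (h1 : α + δ ≤ 1) (h2 : 0 ≤ α - δ) :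
    (f (α + δ) + f (α - δ)) / (2 * f α) ≥ Real.sqrt (1 - 1 / (n : ℝ)) := by
  obtain rfl : f = logisticMap √2 := funext hf
  have hfα : 0 < logisticMap √2 α := logisticMap_pos (by positivity) hα
  exact stmt_2_general (Real.sq_sqrt zero_le_two).le (mod_cast hn) hfα.ne'
    (by rwa [abs_of_nonneg hδ0, abs_of_pos hfα])
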